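/- arXiv:1207.5295 — 7 statements merged into one kernel-verified Lean document; each statement's English description precedes it below -/
import Mathlib

section
/- Let A, B ∈ G(Z,C) and z* ∈ C⁻ \ {0}. Then A ⊕ H(z*) ⊇ B ⊕ H(z*) if and only if H(z*) −_{z*} B ⊇ H(z*) −_{z*} A. -/
open Set Topology Pointwise

noncomputable section

variable {X Z : Type*}

/-- The family `G(Z,C)` of subsets `A` with `A = cl co (A + C)`. -/
def Gset [AddCommGroup Z] [Module ℝ Z] [TopologicalSpace Z] (C : Set Z) : Set (Set Z) :=
  {A | A = closure (convexHull ℝ (A + C))}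

/-- `A ⊕ B = cl (A + B)` (Minkowski sum, with `A + ∅ = ∅`). -/
def oplus [AddCommGroup Z] [TopologicalSpace Z] (A B : Set Z) : Set Z :=
  closure (A + B)

/-- The homogeneous closed half-space `H(z*) = {z : z*(z) ≤ 0}`. -/
def Hset [TopologicalSpace Z] [AddCommGroup Z] [Module ℝ Z] (zs : Z →L[ℝ] ℝ) : Set Z :=
  {z | zs z ≤ 0}

/-- `A −_{z*} B = {z : B + z ⊆ A ⊕ H(z*)}`. -/
def resid [TopologicalSpace Z] [AddCommGroup Z] [Module ℝ Z]
    (zs : Z →L[ℝ] ℝ) (A B : Set Z) : Set Z :=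
  {z | ∀ b ∈ B, b + z ∈ oplus A (Hset zs)}

/-- Convexity of a set-valued function: `f(t x₁ + (1-t) x₂) ⊇ t f(x₁) ⊕ (1-t) f(x₂)`. -/
def ConvexSV [AddCommGroup X] [Module ℝ X] [TopologicalSpace Z] [AddCommGroup Z] [Module ℝ Z]
    (f : X → Set Z) : Prop :=
  ∀ x₁ x₂ : X, ∀ t : ℝ, 0 < t → t < 1 →
    oplus (t • f x₁) ((1 - t) • f x₂) ⊆ f (t • x₁ + (1 - t) • x₂)

/-- Directional derivative `f'_{z*}(x₀, x) = ⋂_{s>0} cl ⋃_{0<t<s} (1/t)(f(x₀+tx) −_{z*} f(x₀))`. -/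
def dirDer [AddCommGroup X] [Module ℝ X] [TopologicalSpace Z] [AddCommGroup Z] [Module ℝ Z]
    (zs : Z →L[ℝ] ℝ) (f : X → Set Z) (x₀ x : X) : Set Z :=
  ⋂ s ∈ Ioi (0:ℝ), closure (⋃ t ∈ Ioo (0:ℝ) s, (1 / t) • resid zs (f (x₀ + t • x)) (f x₀))

/-- `S_{(x*,z*)}(x) = {z : x*(x) + z*(z) ≤ 0}`. -/
def Sfun [TopologicalSpace X] [AddCommGroup X] [Module ℝ X]
    [TopologicalSpace Z] [AddCommGroup Z] [Module ℝ Z]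
    (xs : X →L[ℝ] ℝ) (zs : Z →L[ℝ] ℝ) (x : X) : Set Z :=
  {z | xs x + zs z ≤ 0}

/-- The `z*`-subdifferential of `f` at `x₀`. -/
def subdiff [TopologicalSpace X] [AddCommGroup X] [Module ℝ X]
    [TopologicalSpace Z] [AddCommGroup Z] [Module ℝ Z]
    (zs : Z →L[ℝ] ℝ) (f : X → Set Z) (x₀ : X) : Set (X →L[ℝ] ℝ) :=
  {xs | ∀ x : X, dirDer zs f x₀ x ⊆ Sfun xs zs x}

/-- Scalarization `φ_{f,z*}(x) = inf{−z*(z) : z ∈ f(x)}` taking values in `EReal`. -/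
def scalFn [TopologicalSpace Z] [AddCommGroup Z] [Module ℝ Z]
    (zs : Z →L[ℝ] ℝ) (f : X → Set Z) (x : X) : EReal :=
  ⨅ z ∈ f x, ((-(zs z) : ℝ) : EReal)

/-- Inf-residuation on `EReal`: `r −• s = inf {t ∈ ℝ : r ≤ s + t}`. -/
def eresid (r s : EReal) : EReal :=
  sInf {t : EReal | ∃ t' : ℝ, t = (t' : EReal) ∧ r ≤ s + (t' : EReal)}

/-- Scalar directional derivative `φ'_{f,z*}(x₀,x) = inf_{t>0} (1/t)(φ(x₀+tx) −• φ(x₀))`. -/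
def scalDer [AddCommGroup X] [Module ℝ X] [TopologicalSpace Z] [AddCommGroup Z] [Module ℝ Z]
    (zs : Z →L[ℝ] ℝ) (f : X → Set Z) (x₀ x : X) : EReal :=
  ⨅ t ∈ Ioi (0:ℝ), (((1 / t : ℝ) : EReal) * eresid (scalFn zs f (x₀ + t • x)) (scalFn zs f x₀))

/-- Inf-translation `f̂(x; M) = cl co ⋃_{m ∈ M} f(m + x)`. -/
def infTrans [AddCommGroup X] [TopologicalSpace Z] [AddCommGroup Z] [Module ℝ Z]
    (f : X → Set Z) (M : Set X) (x : X) : Set Z :=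
  closure (convexHull ℝ (⋃ m ∈ M, f (m + x)))

end

/-!
Everything is decided by the set `zs '' A` of real values: `A ⊕ H(zs)` consists of the points whose
value lies in the closed down-set generated by `zs '' A`, and `H(zs) −_{zs} A` of the points `z` for
which `-zs z` is an upper bound of `zs '' A`. In `ℝ` a closed down-set is the set of lower bounds of
its upper bounds (including `∅` and `ℝ`), so the two inclusions correspond to each other under the
antitone Galois connection between `upperBounds` and `lowerBounds`.
-/

section Order

variable {α : Type*}

theorem lowerBounds_upperBounds_subset_lowerBounds_upperBounds_iff [Preorder α] {s t : Set α} :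
    lowerBounds (upperBounds s) ⊆ lowerBounds (upperBounds t) ↔ upperBounds t ⊆ upperBounds s := by
  refine ⟨fun h b hb a ha ↦ ?_, fun h ↦ lowerBounds_mono_set h⟩
  exact h (subset_lowerBounds_upperBounds s ha) hb

theorem closure_lowerClosure_eq_lowerBounds_upperBounds [LinearOrder α] [TopologicalSpace α]
    [OrderTopology α] [DenselyOrdered α] [NoMinOrder α] (s : Set α) :
    closure (lowerClosure s : Set α) = lowerBounds (upperBounds s) := by
  apply Subset.antisymm
  · intro x hx b hb
    have lowerClosure_subset_Iic : (lowerClosure s : Set α) ⊆ Iic b := by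
      rwa [← mem_upperBounds_iff_subset_Iic, upperBounds_lowerClosure]
    exact closure_minimal lowerClosure_subset_Iic isClosed_Iic hx
  · intro x hx
    have Iio_subset_lowerClosure : Iio x ⊆ lowerClosure s := by
      intro y hyx
      obtain ⟨a, ha, hya⟩ : ∃ a ∈ s, y < a := by
        by_contra! hy
        exact (hx hy).not_gt hyx
      exact ⟨a, ha, hya.le⟩
    have mem_closure_Iio : x ∈ closure (Iio x) := closure_Iio x ▸ self_mem_Iic
    exact closure_mono Iio_subset_lowerClosure mem_closure_Iio

end Order

section HalfSpace

variable {Z : Type*} [AddCommGroup Z] [Module ℝ Z] [TopologicalSpace Z]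

theorem add_Hset_eq_preimage_lowerClosure (zs : Z →L[ℝ] ℝ) (A : Set Z) :
    A + Hset zs = zs ⁻¹' lowerClosure (zs '' A) := by
  ext w
  constructor
  · rintro ⟨a, ha, h, hh : zs h ≤ 0, rfl⟩
    exact ⟨zs a, mem_image_of_mem zs ha, by simpa using hh⟩
  · rintro ⟨_, ⟨a, ha, rfl⟩, hwa⟩
    exact ⟨a, ha, w - a, by simpa [Hset] using hwa, add_sub_cancel a w⟩

theorem oplus_Hset_self (zs : Z →L[ℝ] ℝ) : oplus (Hset zs) (Hset zs) = Hset zs := by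
  have isClosed_Hset : IsClosed (Hset zs) := isClosed_le zs.continuous continuous_const
  have add_self : Hset zs + Hset zs = Hset zs := by
    apply Subset.antisymm
    · rintro _ ⟨h, hh : zs h ≤ 0, k, hk : zs k ≤ 0, rfl⟩
      exact (map_add zs h k).trans_le (add_nonpos hh hk)
    · exact subset_add_left _ (map_zero zs).le
  rw [oplus, add_self, isClosed_Hset.closure_eq]

theorem resid_Hset_eq_preimage_upperBounds (zs : Z →L[ℝ] ℝ) (A : Set Z) :
    resid zs (Hset zs) A = (-zs) ⁻¹' upperBounds (zs '' A) := by
  ext z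
  rw [resid, oplus_Hset_self]
  simp [Hset, mem_upperBounds, le_neg_iff_add_nonpos_right]

variable [ContinuousAdd Z] [ContinuousSMul ℝ Z]

theorem oplus_Hset_eq_preimage_lowerBounds_upperBounds {zs : Z →L[ℝ] ℝ} (hzs : zs ≠ 0)
    (A : Set Z) : oplus A (Hset zs) = zs ⁻¹' lowerBounds (upperBounds (zs '' A)) := by
  rw [oplus, add_Hset_eq_preimage_lowerClosure,
    ← (zs.isOpenMap_of_ne_zero hzs).preimage_closure_eq_closure_preimage zs.continuous,
    closure_lowerClosure_eq_lowerBounds_upperBounds]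

theorem stmt0_general {zs : Z →L[ℝ] ℝ} (hzs : zs ≠ 0) (A B : Set Z) :
    oplus B (Hset zs) ⊆ oplus A (Hset zs) ↔
      resid zs (Hset zs) A ⊆ resid zs (Hset zs) B := by
  have zs_surjective : Function.Surjective zs := LinearMap.surjective (mod_cast hzs)
  have neg_zs_surjective : Function.Surjective (-zs) := neg_surjective.comp zs_surjective
  rw [oplus_Hset_eq_preimage_lowerBounds_upperBounds hzs,
    oplus_Hset_eq_preimage_lowerBounds_upperBounds hzs,
    zs_surjective.preimage_subset_preimage_iff,
    lowerBounds_upperBounds_subset_lowerBounds_upperBounds_iff,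
    resid_Hset_eq_preimage_upperBounds, resid_Hset_eq_preimage_upperBounds,
    neg_zs_surjective.preimage_subset_preimage_iff]

end HalfSpace

theorem stmt0 {Z : Type*} [AddCommGroup Z] [Module ℝ Z] [TopologicalSpace Z]
    [IsTopologicalAddGroup Z] [ContinuousSMul ℝ Z] [LocallyConvexSpace ℝ Z]
    (C : Set Z) (hCconv : Convex ℝ C) (hC0 : (0:Z) ∈ C)
    (hCcone : ∀ t : ℝ, 0 < t → t • C ⊆ C) (hclC : closure C ≠ Set.univ)
    (zs : Z →L[ℝ] ℝ) (hzs : ∀ z ∈ C, zs z ≤ 0) (hzs0 : zs ≠ 0)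
    (A B : Set Z) (hA : A ∈ Gset C) (hB : B ∈ Gset C) :
    oplus B (Hset zs) ⊆ oplus A (Hset zs) ↔
      resid zs (Hset zs) A ⊆ resid zs (Hset zs) B :=
  stmt0_general hzs0 A B
end

section
/- Let A, B ∈ G(Z,C) and z* ∈ C⁻ \ {0}. Then A −_{z*} B ∉ {Z, ∅} if and only if both A ⊕ H(z*) ∉ {Z, ∅} and B ⊕ H(z*) ∉ {Z, ∅}. -/
open Set Topology Pointwise

/-!
Up to its boundary, `A ⊕ H(z*)` is the half-space `{z | z*(z) ≤ sup z*(A)}`, so it is proper exactly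
when `A` is nonempty and `z*` is bounded above on `A`. Some translate of a nonempty `B` fits into
such a proper half-space exactly when `z*` is bounded above on `B` too; the translation then only
has to push `sup z*(B)` below a value of `z*` on `A`.
-/

theorem surjective_of_continuousLinearMap_ne_zero {K E : Type*} [DivisionRing K]
    [TopologicalSpace K] [AddCommGroup E] [Module K E] [TopologicalSpace E] {f : E →L[K] K}
    (hf : f ≠ 0) : Function.Surjective f :=
  LinearMap.surjective (f := (f : E →ₗ[K] K)) (by exact_mod_cast hf)

section

variable {Z : Type*} [AddCommGroup Z] [Module ℝ Z] [TopologicalSpace Z]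
  {zs : Z →L[ℝ] ℝ} {A B : Set Z}

theorem mem_oplus_Hset_of_le {a z : Z} (ha : a ∈ A) (hza : zs z ≤ zs a) :
    z ∈ oplus A (Hset zs) := by
  have hdiff : z - a ∈ Hset zs := by
    simpa only [Hset, mem_ofPred_eq, map_sub, sub_nonpos] using hza
  exact subset_closure ⟨a, ha, z - a, hdiff, add_sub_cancel a z⟩

theorem map_le_of_mem_oplus_Hset {M : ℝ} {z : Z} (hM : M ∈ upperBounds (zs '' A))
    (hz : z ∈ oplus A (Hset zs)) : zs z ≤ M := by
  have hclosed : IsClosed {w : Z | zs w ≤ M} := isClosed_le zs.continuous continuous_const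
  refine closure_minimal ?_ hclosed hz
  rintro _ ⟨a, ha, h, hh, rfl⟩
  calc zs (a + h) = zs a + zs h := map_add zs a h
    _ ≤ M + 0 := add_le_add (hM (mem_image_of_mem zs ha)) hh
    _ = M := add_zero M

theorem oplus_Hset_nonempty_iff : (oplus A (Hset zs)).Nonempty ↔ A.Nonempty :=
  ⟨fun h => (closure_nonempty_iff.1 h).of_add_left,
    fun ⟨a, ha⟩ => ⟨a, mem_oplus_Hset_of_le ha le_rfl⟩⟩

theorem oplus_Hset_ne_univ_iff (hzs : zs ≠ 0) :
    oplus A (Hset zs) ≠ univ ↔ BddAbove (zs '' A) := by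
  rw [ne_univ_iff_exists_notMem]
  constructor
  · rintro ⟨z, hz⟩
    refine ⟨zs z, forall_mem_image.2 fun a ha => ?_⟩
    exact (not_le.1 fun hza => hz (mem_oplus_Hset_of_le ha hza)).le
  · rintro ⟨M, hM⟩
    obtain ⟨z, hz⟩ := surjective_of_continuousLinearMap_ne_zero hzs (M + 1)
    exact ⟨z, fun hmem => by linarith [map_le_of_mem_oplus_Hset hM hmem]⟩

theorem resid_ne_univ_iff :
    resid zs A B ≠ univ ↔ B.Nonempty ∧ oplus A (Hset zs) ≠ univ := by
  simp only [ne_univ_iff_exists_notMem]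
  constructor
  · rintro ⟨z, hz⟩
    simp only [resid, mem_ofPred_eq, not_forall] at hz
    obtain ⟨b, hb, hbz⟩ := hz
    exact ⟨⟨b, hb⟩, b + z, hbz⟩
  · rintro ⟨⟨b, hb⟩, w, hw⟩
    exact ⟨w - b, fun hmem => hw (add_sub_cancel b w ▸ hmem b hb)⟩

theorem resid_nonempty_iff (hzs : zs ≠ 0) (hA : BddAbove (zs '' A)) (hB : B.Nonempty) :
    (resid zs A B).Nonempty ↔ A.Nonempty ∧ BddAbove (zs '' B) := by
  constructor
  · rintro ⟨z, hz⟩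
    obtain ⟨b, hb⟩ := hB
    obtain ⟨M, hM⟩ := hA
    refine ⟨oplus_Hset_nonempty_iff.1 ⟨b + z, hz b hb⟩, M - zs z, ?_⟩
    refine forall_mem_image.2 fun b' hb' => le_sub_iff_add_le.2 ?_
    exact map_add zs b' z ▸ map_le_of_mem_oplus_Hset hM (hz b' hb')
  · rintro ⟨⟨a, ha⟩, N, hN⟩
    obtain ⟨z, hz⟩ := surjective_of_continuousLinearMap_ne_zero hzs (zs a - N)
    refine ⟨z, fun b hb => mem_oplus_Hset_of_le ha ?_⟩
    calc zs (b + z) = zs b + (zs a - N) := by rw [map_add, hz]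
      _ ≤ N + (zs a - N) := by gcongr; exact hN (mem_image_of_mem zs hb)
      _ = zs a := add_sub_cancel N (zs a)

theorem stmt1_general (hzs : zs ≠ 0) (A B : Set Z) :
    (resid zs A B ≠ univ ∧ resid zs A B ≠ ∅) ↔
      ((oplus A (Hset zs) ≠ univ ∧ oplus A (Hset zs) ≠ ∅) ∧
        (oplus B (Hset zs) ≠ univ ∧ oplus B (Hset zs) ≠ ∅)) := by
  simp only [← nonempty_iff_ne_empty, resid_ne_univ_iff, oplus_Hset_ne_univ_iff hzs,
    oplus_Hset_nonempty_iff]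
  calc (B.Nonempty ∧ BddAbove (zs '' A)) ∧ (resid zs A B).Nonempty
    _ ↔ (B.Nonempty ∧ BddAbove (zs '' A)) ∧ A.Nonempty ∧ BddAbove (zs '' B) :=
      and_congr_right fun ⟨hB, hA⟩ => resid_nonempty_iff hzs hA hB
    _ ↔ (BddAbove (zs '' A) ∧ A.Nonempty) ∧ BddAbove (zs '' B) ∧ B.Nonempty := by tauto

end

theorem stmt1 {Z : Type*} [AddCommGroup Z] [Module ℝ Z] [TopologicalSpace Z]
    [IsTopologicalAddGroup Z] [ContinuousSMul ℝ Z] [LocallyConvexSpace ℝ Z]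
    (C : Set Z) (hCconv : Convex ℝ C) (hC0 : (0:Z) ∈ C)
    (hCcone : ∀ t : ℝ, 0 < t → t • C ⊆ C) (hclC : closure C ≠ Set.univ)
    (zs : Z →L[ℝ] ℝ) (hzs : ∀ z ∈ C, zs z ≤ 0) (hzs0 : zs ≠ 0)
    (A B : Set Z) (hA : A ∈ Gset C) (hB : B ∈ Gset C) :
    (resid zs A B ≠ Set.univ ∧ resid zs A B ≠ ∅) ↔
      ((oplus A (Hset zs) ≠ Set.univ ∧ oplus A (Hset zs) ≠ ∅) ∧
        (oplus B (Hset zs) ≠ Set.univ ∧ oplus B (Hset zs) ≠ ∅)) :=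
  stmt1_general hzs0 A B
end

section
/- Let A, B ∈ G(Z,C) and z* ∈ C⁻ \ {0}. Then (A ⊕ B) −_{z*} B ⊇ A ⊕ H(z*). The inclusion is strict if and only if either A = B = ∅, or A ⊕ H(z*) ∉ {Z, ∅} and B ⊕ H(z*) ∈ {Z, ∅}. -/
open Set Topology Pointwise

/-!
Everything is read off the support function `σ_A = sup_A z*`, with values in `[-∞, ∞]`. It is
additive for `⊕`, because in `EReal` the convention `⊥ + ⊤ = ⊥` matches `∅ + B = ∅`, and
`A ⊕ H(z*)` is the half-space `{z | z* z ≤ σ_A}`. Hence `(A ⊕ B) −_{z*} B` is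
`{z | σ_B + z* z ≤ σ_A + σ_B}`, and since `z*` is onto `ℝ`, strictness says that some real
`r > σ_A` satisfies `σ_B + r ≤ σ_A + σ_B`. A finite `σ_B` cancels, so this can only happen when
`σ_B = ±∞`.
-/

section EReal

theorem closure_setOf_coe_lt (s : EReal) :
    closure {r : ℝ | (r : EReal) < s} = {r : ℝ | (r : EReal) ≤ s} := by
  induction s with
  | bot => simp
  | coe x =>
    simp only [EReal.coe_lt_coe_iff, EReal.coe_le_coe_iff]
    exact closure_Iio x
  | top => simp

theorem exists_coe_gt_and_add_le_add_iff {a b : EReal} :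
    (∃ r : ℝ, a < r ∧ b + r ≤ a + b) ↔
      (a = ⊥ ∧ b = ⊥) ∨ ((a ≠ ⊤ ∧ a ≠ ⊥) ∧ (b = ⊤ ∨ b = ⊥)) := by
  induction a with
  | bot => simp [EReal.bot_lt_coe]
  | top => simp
  | coe x =>
    have exists_gt_coe : ∃ r : ℝ, (x : EReal) < r := ⟨x + 1, by exact_mod_cast lt_add_one x⟩
    induction b with
    | bot => simpa using exists_gt_coe
    | top => simpa using exists_gt_coe
    | coe y =>
      have not_exists_gt : ¬∃ r : ℝ, (x : EReal) < r ∧ (y : EReal) + r ≤ x + y := by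
        rintro ⟨r, hxr, hle⟩
        norm_cast at hxr hle
        linarith
      simpa using not_exists_gt

end EReal

section SupportFunction

variable {Z : Type*} [AddCommGroup Z] [Module ℝ Z] [TopologicalSpace Z]

/-- The support function `σ_A(z*) = sup_{a ∈ A} z*(a)` of `A`, which determines `A ⊕ H(z*)`. It
takes values in `EReal`, so that it is `⊥` exactly for `A = ∅` and `⊤` exactly when `z*` is
unbounded above on `A`. -/
noncomputable def supportFn (zs : Z →L[ℝ] ℝ) (A : Set Z) : EReal :=
  ⨆ a ∈ A, (zs a : EReal)

variable {zs : Z →L[ℝ] ℝ} {A B : Set Z} {z : Z}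

theorem supportFn_le_iff {c : EReal} : supportFn zs A ≤ c ↔ ∀ a ∈ A, (zs a : EReal) ≤ c :=
  iSup₂_le_iff

theorem le_supportFn (hz : z ∈ A) : (zs z : EReal) ≤ supportFn zs A :=
  supportFn_le_iff.1 le_rfl z hz

theorem lt_supportFn_iff {c : EReal} : c < supportFn zs A ↔ ∃ a ∈ A, c < (zs a : EReal) := by
  simp only [supportFn, lt_iSup_iff, exists_prop]

theorem supportFn_eq_bot_iff : supportFn zs A = ⊥ ↔ A = ∅ := by
  simp [supportFn, eq_empty_iff_forall_notMem]

theorem supportFn_singleton : supportFn zs {z} = zs z := by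
  simp [supportFn]

theorem supportFn_closure : supportFn zs (closure A) = supportFn zs A := by
  have sublevel_closed : IsClosed {z | (zs z : EReal) ≤ supportFn zs A} :=
    isClosed_le (continuous_coe_real_ereal.comp zs.continuous) continuous_const
  apply le_antisymm
  · exact supportFn_le_iff.2 (closure_minimal (fun _ ↦ le_supportFn) sublevel_closed)
  · exact supportFn_le_iff.2 fun _ ha ↦ le_supportFn (subset_closure ha)

theorem supportFn_add : supportFn zs (A + B) = supportFn zs A + supportFn zs B := by
  apply le_antisymm
  · rw [supportFn_le_iff]
    rintro _ ⟨a, ha, b, hb, rfl⟩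
    rw [map_add, EReal.coe_add]
    exact add_le_add (le_supportFn ha) (le_supportFn hb)
  · refine EReal.add_le_of_forall_lt fun s hs t ht ↦ ?_
    obtain ⟨a, ha, hsa⟩ := lt_supportFn_iff.1 hs
    obtain ⟨b, hb, htb⟩ := lt_supportFn_iff.1 ht
    calc s + t ≤ zs a + zs b := add_le_add hsa.le htb.le
      _ = (zs (a + b) : EReal) := by rw [map_add, EReal.coe_add]
      _ ≤ supportFn zs (A + B) := le_supportFn (add_mem_add ha hb)

theorem supportFn_oplus : supportFn zs (oplus A B) = supportFn zs A + supportFn zs B :=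
  supportFn_closure.trans supportFn_add

theorem zero_mem_Hset : (0 : Z) ∈ Hset zs :=
  (map_zero zs).le

theorem supportFn_Hset : supportFn zs (Hset zs) = 0 := by
  apply le_antisymm
  · exact supportFn_le_iff.2 fun _ hz ↦ EReal.coe_nonpos.2 hz
  · simpa using le_supportFn (zs := zs) zero_mem_Hset

theorem setOf_lt_supportFn_subset_add_Hset :
    {z | (zs z : EReal) < supportFn zs A} ⊆ A + Hset zs := by
  intro z hz
  obtain ⟨a, ha, hlt⟩ := lt_supportFn_iff.1 hz
  have hza : z - a ∈ Hset zs := by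
    simpa [Hset] using (EReal.coe_lt_coe_iff.1 hlt).le
  exact ⟨a, ha, z - a, hza, add_sub_cancel a z⟩

theorem oplus_Hset_eq_empty_iff : oplus A (Hset zs) = ∅ ↔ A = ∅ := by
  have Hset_nonempty : (Hset zs).Nonempty := ⟨0, zero_mem_Hset⟩
  rw [oplus, closure_empty_iff, add_eq_empty, or_iff_left Hset_nonempty.ne_empty]

section ContinuousOperations

variable [ContinuousAdd Z] [ContinuousSMul ℝ Z]

theorem oplus_Hset_eq_setOf_le (hzs : zs ≠ 0) (A : Set Z) :
    oplus A (Hset zs) = {z | (zs z : EReal) ≤ supportFn zs A} := by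
  apply Subset.antisymm
  · intro z hz
    calc (zs z : EReal) ≤ supportFn zs (oplus A (Hset zs)) := le_supportFn hz
      _ = supportFn zs A := by rw [supportFn_oplus, supportFn_Hset, add_zero]
  · have zs_open : IsOpenMap zs := zs.isOpenMap_of_ne_zero hzs
    calc {z | (zs z : EReal) ≤ supportFn zs A}
        = zs ⁻¹' closure {r : ℝ | (r : EReal) < supportFn zs A} := by
          rw [closure_setOf_coe_lt, preimage_ofPred_eq]
      _ = closure {z | (zs z : EReal) < supportFn zs A} :=
          zs_open.preimage_closure_eq_closure_preimage zs.continuous _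
      _ ⊆ oplus A (Hset zs) := closure_mono setOf_lt_supportFn_subset_add_Hset

theorem oplus_Hset_eq_univ_iff (hzs : zs ≠ 0) :
    oplus A (Hset zs) = univ ↔ supportFn zs A = ⊤ := by
  have zs_surj : Function.Surjective zs := LinearMap.surjective_of_ne_zero (mod_cast hzs)
  calc oplus A (Hset zs) = univ ↔ ∀ z, (zs z : EReal) ≤ supportFn zs A := by
        rw [oplus_Hset_eq_setOf_le hzs, eq_univ_iff_forall]; rfl
    _ ↔ ∀ r : ℝ, (r : EReal) ≤ supportFn zs A :=
        (zs_surj.forall (p := fun r : ℝ ↦ (r : EReal) ≤ supportFn zs A)).symm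
    _ ↔ supportFn zs A = ⊤ := by
        rw [← top_le_iff, ← EReal.ge_of_forall_gt_iff_ge]; simp

theorem resid_eq_setOf_add_le (hzs : zs ≠ 0) (A B : Set Z) :
    resid zs A B = {z | supportFn zs B + zs z ≤ supportFn zs A} := by
  ext z
  calc z ∈ resid zs A B ↔ ∀ w ∈ B + {z}, (zs w : EReal) ≤ supportFn zs A := by
        simp only [resid, oplus_Hset_eq_setOf_le hzs, add_singleton, forall_mem_image,
          mem_ofPred_eq]
    _ ↔ supportFn zs B + zs z ≤ supportFn zs A := by
        rw [← supportFn_le_iff, supportFn_add, supportFn_singleton]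

theorem oplus_Hset_subset_resid_oplus (hzs : zs ≠ 0) (A B : Set Z) :
    oplus A (Hset zs) ⊆ resid zs (oplus A B) B := by
  rw [oplus_Hset_eq_setOf_le hzs, resid_eq_setOf_add_le hzs, supportFn_oplus,
    add_comm (supportFn zs A)]
  intro z (hz : (zs z : EReal) ≤ supportFn zs A)
  exact add_le_add_right hz (supportFn zs B)

theorem oplus_Hset_ssubset_resid_oplus_iff (hzs : zs ≠ 0) :
    oplus A (Hset zs) ⊂ resid zs (oplus A B) B ↔
      ∃ r : ℝ, supportFn zs A < r ∧
        supportFn zs B + r ≤ supportFn zs A + supportFn zs B := by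
  have zs_surj : Function.Surjective zs := LinearMap.surjective_of_ne_zero (mod_cast hzs)
  rw [ssubset_iff_exists, and_iff_right (oplus_Hset_subset_resid_oplus hzs A B),
    oplus_Hset_eq_setOf_le hzs, resid_eq_setOf_add_le hzs, supportFn_oplus, zs_surj.exists]
  simp only [mem_ofPred_eq, not_le, and_comm]

end ContinuousOperations

end SupportFunction

theorem stmt3_general {Z : Type*} [AddCommGroup Z] [Module ℝ Z] [TopologicalSpace Z]
    [ContinuousAdd Z] [ContinuousSMul ℝ Z] {zs : Z →L[ℝ] ℝ} (hzs0 : zs ≠ 0)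
    (A B : Set Z) :
    oplus A (Hset zs) ⊆ resid zs (oplus A B) B ∧
    (oplus A (Hset zs) ⊂ resid zs (oplus A B) B ↔
      (A = ∅ ∧ B = ∅) ∨
        ((oplus A (Hset zs) ≠ Set.univ ∧ oplus A (Hset zs) ≠ ∅) ∧
          (oplus B (Hset zs) = Set.univ ∨ oplus B (Hset zs) = ∅))) := by
  refine ⟨oplus_Hset_subset_resid_oplus hzs0 A B, ?_⟩
  rw [oplus_Hset_ssubset_resid_oplus_iff hzs0, exists_coe_gt_and_add_le_add_iff]
  simp only [oplus_Hset_eq_univ_iff hzs0, oplus_Hset_eq_empty_iff, supportFn_eq_bot_iff, ne_eq]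

theorem stmt3 {Z : Type*} [AddCommGroup Z] [Module ℝ Z] [TopologicalSpace Z]
    [IsTopologicalAddGroup Z] [ContinuousSMul ℝ Z] [LocallyConvexSpace ℝ Z]
    (C : Set Z) (hCconv : Convex ℝ C) (hC0 : (0:Z) ∈ C)
    (hCcone : ∀ t : ℝ, 0 < t → t • C ⊆ C) (hclC : closure C ≠ Set.univ)
    (zs : Z →L[ℝ] ℝ) (hzs : ∀ z ∈ C, zs z ≤ 0) (hzs0 : zs ≠ 0)
    (A B : Set Z) (hA : A ∈ Gset C) (hB : B ∈ Gset C) :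
    oplus A (Hset zs) ⊆ resid zs (oplus A B) B ∧
    (oplus A (Hset zs) ⊂ resid zs (oplus A B) B ↔
      (A = ∅ ∧ B = ∅) ∨
        ((oplus A (Hset zs) ≠ Set.univ ∧ oplus A (Hset zs) ≠ ∅) ∧
          (oplus B (Hset zs) = Set.univ ∨ oplus B (Hset zs) = ∅))) :=
  stmt3_general hzs0 A B
end

section
/- Let A, B ∈ G(Z,C) and z* ∈ C⁻ \ {0}. If H(z*) ⊇ A −_{z*} B, then A ⊆ B ⊕ H(z*). -/
open Set Topology Pointwise

/-!
Everything is read off along `z*`: the sum `A + H(z*)` is the preimage under `z*` of the down-set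
generated by `z*(A)`, and since a nonzero functional is an open map, taking closures commutes with
this preimage. So `A ⊆ B ⊕ H(z*)` says that no value `z*(a)` with `a ∈ A` exceeds `sup z*(B)`. If
some `z*(a)` did, say `z*(b) ≤ r < z*(a)` for all `b ∈ B`, then any `z` with `z*(z) = z*(a) - r > 0`
would lie in `A −_{z*} B` but not in `H(z*)`.
-/

section HalfSpaces

variable {Z : Type*} [AddCommGroup Z] [Module ℝ Z] [TopologicalSpace Z]
  {zs : Z →L[ℝ] ℝ} {A B : Set Z}

theorem mem_add_Hset_iff {z : Z} : z ∈ A + Hset zs ↔ ∃ a ∈ A, zs z ≤ zs a := by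
  constructor
  · rintro ⟨a, ha, w, hw : zs w ≤ 0, rfl⟩
    exact ⟨a, ha, by simpa using hw⟩
  · rintro ⟨a, ha, hle⟩
    have hsub : zs (z - a) ≤ 0 := by simpa using hle
    exact ⟨a, ha, z - a, hsub, add_sub_cancel a z⟩

theorem add_Hset_eq_preimage (zs : Z →L[ℝ] ℝ) (A : Set Z) :
    A + Hset zs = zs ⁻¹' (lowerClosure (zs '' A) : Set ℝ) := by
  ext z
  simp [mem_add_Hset_iff]

theorem mem_resid_of_forall_le {a z : Z} (ha : a ∈ A) (hle : ∀ b ∈ B, zs (b + z) ≤ zs a) :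
    z ∈ resid zs A B :=
  fun b hb ↦ subset_closure (mem_add_Hset_iff.2 ⟨a, ha, hle b hb⟩)

theorem exists_le_apply_of_resid_subset_Hset (hzs0 : zs ≠ 0) (h : resid zs A B ⊆ Hset zs)
    {a : Z} (ha : a ∈ A) {r : ℝ} (hr : r < zs a) : ∃ b ∈ B, r ≤ zs b := by
  by_contra! hB
  obtain ⟨z, hz⟩ : ∃ z, zs z = zs a - r :=
    LinearMap.surjective (f := (zs : Z →ₗ[ℝ] ℝ)) (by exact_mod_cast hzs0) (zs a - r)
  have hmem : z ∈ resid zs A B := mem_resid_of_forall_le ha fun b hb ↦ by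
    rw [map_add, hz]
    linarith [hB b hb]
  have hnonpos : zs z ≤ 0 := h hmem
  linarith

variable [ContinuousAdd Z] [ContinuousSMul ℝ Z]

theorem oplus_Hset_eq_preimage_closure (hzs0 : zs ≠ 0) (A : Set Z) :
    oplus A (Hset zs) = zs ⁻¹' closure (lowerClosure (zs '' A) : Set ℝ) := by
  rw [oplus, add_Hset_eq_preimage,
    (zs.isOpenMap_of_ne_zero hzs0).preimage_closure_eq_closure_preimage zs.continuous]

theorem mem_oplus_Hset_of_forall_lt_exists_le (hzs0 : zs ≠ 0) {z : Z}
    (hlt : ∀ r < zs z, ∃ a ∈ A, r ≤ zs a) : z ∈ oplus A (Hset zs) := by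
  have hsub : Iio (zs z) ⊆ (lowerClosure (zs '' A) : Set ℝ) := fun r hr ↦ by
    simpa using hlt r hr
  rw [oplus_Hset_eq_preimage_closure hzs0, mem_preimage]
  exact closure_mono hsub (by simp)

theorem stmt6_general (hzs0 : zs ≠ 0) (h : resid zs A B ⊆ Hset zs) : A ⊆ oplus B (Hset zs) :=
  fun _ ha ↦ mem_oplus_Hset_of_forall_lt_exists_le hzs0 fun _ hr ↦
    exists_le_apply_of_resid_subset_Hset hzs0 h ha hr

end HalfSpaces

theorem stmt6 {Z : Type*} [AddCommGroup Z] [Module ℝ Z] [TopologicalSpace Z]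
    [IsTopologicalAddGroup Z] [ContinuousSMul ℝ Z] [LocallyConvexSpace ℝ Z]
    (C : Set Z) (hCconv : Convex ℝ C) (hC0 : (0:Z) ∈ C)
    (hCcone : ∀ t : ℝ, 0 < t → t • C ⊆ C) (hclC : closure C ≠ Set.univ)
    (zs : Z →L[ℝ] ℝ) (hzs : ∀ z ∈ C, zs z ≤ 0) (hzs0 : zs ≠ 0)
    (A B : Set Z) (hA : A ∈ Gset C) (hB : B ∈ Gset C)
    (h : resid zs A B ⊆ Hset zs) :
    A ⊆ oplus B (Hset zs) :=
  stmt6_general hzs0 h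
end

section
/- Let f : X → G(Z,C) be convex, x₀ ∈ dom f and z* ∈ C⁻ \ {0}. Then dom f'_{z*}(x₀, ·) = {x ∈ X : f'_{z*}(x₀, x) ≠ ∅} equals the cone ⋃_{t>0} t·(dom f − x₀). Moreover, f'_{z*}(x₀, 0) = H(z*) if f(x₀) ⊕ H(z*) ∉ {Z, ∅}, and f'_{z*}(x₀, 0) = Z if f(x₀) ⊕ H(z*) ∈ {Z, ∅}. -/
open Set Topology Pointwise

/-!
Everything is decided by `zs`: a point lies in `A ⊕ H(zs)` as soon as some point of `A` has at
least its `zs`-value, and an upper bound of `zs` on `A` remains one on `A ⊕ H(zs)`.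

If `f (x₀ + v)` contains `p`, convexity puts `t p + (1 - t) b` into `f (x₀ + t v)` for every
`b ∈ f x₀`. If `zs` is dominated on `f x₀` by its value at some `w`, this places `p - w`
in every difference quotient in direction `v` with step `t < 1`; otherwise each of them contains
`0`. In direction `0` every difference quotient is a positive multiple of `f x₀ −_{zs} f x₀`, which
is the closed cone `H(zs)` or the whole space.
-/

section HalfSpace

variable {Z : Type*} [AddCommGroup Z] [Module ℝ Z] [TopologicalSpace Z]
  {zs : Z →L[ℝ] ℝ} {A B : Set Z}

theorem isClosed_Hset : IsClosed (Hset zs) :=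
  isClosed_le zs.continuous continuous_const

theorem smul_Hset {t : ℝ} (ht : 0 < t) : t • Hset zs = Hset zs := by
  ext z
  rw [mem_smul_set_iff_inv_smul_mem₀ ht.ne']
  change zs (t⁻¹ • z) ≤ 0 ↔ zs z ≤ 0
  rw [map_smul, smul_eq_mul, inv_mul_le_iff₀ ht, mul_zero]

theorem mem_oplus_Hset_of_apply_le {a z : Z} (ha : a ∈ A) (hz : zs z ≤ zs a) :
    z ∈ oplus A (Hset zs) :=
  subset_closure ⟨a, ha, z - a, by simpa [Hset] using hz, add_sub_cancel a z⟩

theorem apply_le_of_mem_oplus_Hset {M : ℝ} (hM : M ∈ upperBounds (zs '' A)) {z : Z}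
    (hz : z ∈ oplus A (Hset zs)) : zs z ≤ M := by
  refine closure_minimal ?_ (isClosed_le zs.continuous continuous_const) hz
  rintro _ ⟨a, ha, h, hh, rfl⟩
  calc zs (a + h) = zs a + zs h := map_add zs a h
    _ ≤ M + 0 := add_le_add (hM (mem_image_of_mem zs ha)) hh
    _ = M := add_zero M

theorem bddAbove_image_of_oplus_Hset_ne_univ (hA : oplus A (Hset zs) ≠ univ) :
    BddAbove (zs '' A) := by
  by_contra hunbdd
  refine hA (eq_univ_of_forall fun z => ?_)
  obtain ⟨_, ⟨a, ha, rfl⟩, hza⟩ := not_bddAbove_iff.1 hunbdd (zs z)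
  exact mem_oplus_Hset_of_apply_le ha hza.le

theorem eq_empty_of_oplus_Hset_eq_empty (hA : oplus A (Hset zs) = ∅) : A = ∅ :=
  eq_empty_of_forall_notMem fun _ ha => hA.le (mem_oplus_Hset_of_apply_le ha le_rfl)

theorem nonempty_of_resid_nonempty (hB : B.Nonempty) (h : (resid zs A B).Nonempty) :
    A.Nonempty := by
  obtain ⟨b, hb⟩ := hB
  obtain ⟨z, hz⟩ := h
  exact (closure_nonempty_iff.1 ⟨b + z, hz b hb⟩).of_add_left

theorem resid_self_eq_Hset (hne : A.Nonempty) (hA : oplus A (Hset zs) ≠ univ) :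
    resid zs A A = Hset zs := by
  have hLUB : IsLUB (zs '' A) (sSup (zs '' A)) :=
    isLUB_csSup (hne.image zs) (bddAbove_image_of_oplus_Hset_ne_univ hA)
  refine Subset.antisymm (fun z hz => ?_) fun z hz b hb => ?_
  · have hshift : sSup (zs '' A) - zs z ∈ upperBounds (zs '' A) := by
      rintro _ ⟨b, hb, rfl⟩
      rw [le_sub_iff_add_le, ← map_add]
      exact apply_le_of_mem_oplus_Hset hLUB.1 (hz b hb)
    exact (le_sub_self_iff _).1 (hLUB.2 hshift)
  · refine mem_oplus_Hset_of_apply_le hb ?_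
    rw [map_add]
    exact add_le_of_nonpos_right hz

theorem resid_self_eq_univ (hA : oplus A (Hset zs) = univ ∨ oplus A (Hset zs) = ∅) :
    resid zs A A = univ := by
  refine eq_univ_of_forall fun z b hb => ?_
  rcases hA with huniv | hempty
  · exact huniv ▸ mem_univ _
  · exact absurd hb (eq_empty_of_oplus_Hset_eq_empty hempty ▸ notMem_empty b)

end HalfSpace

section DirectionalDerivative

variable {Z : Type*} [AddCommGroup Z] [Module ℝ Z] [TopologicalSpace Z]
  {X : Type*} [AddCommGroup X] [Module ℝ X]
  {zs : Z →L[ℝ] ℝ} {f : X → Set Z} {x₀ x : X}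

theorem mem_iUnion_Ioi_smul_sub_singleton {D : Set X} :
    x ∈ ⋃ t ∈ Ioi (0 : ℝ), t • (D - {x₀}) ↔ ∃ t > (0 : ℝ), x₀ + t • x ∈ D := by
  have hscale {t : ℝ} (ht : 0 < t) : x ∈ t⁻¹ • (D - {x₀}) ↔ x₀ + t • x ∈ D := by
    rw [mem_smul_set_iff_inv_smul_mem₀ (inv_ne_zero ht.ne'), inv_inv, sub_singleton]
    simp [sub_eq_iff_eq_add']
  simp only [mem_iUnion, mem_Ioi, exists_prop]
  constructor
  · rintro ⟨t, ht, hx⟩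
    exact ⟨t⁻¹, inv_pos.2 ht, (hscale (inv_pos.2 ht)).1 (by rwa [inv_inv])⟩
  · rintro ⟨t, ht, hx⟩
    exact ⟨t⁻¹, inv_pos.2 ht, (hscale ht).2 hx⟩

theorem mem_dirDer_of_eventually_smul_mem_resid {z : Z}
    (hz : ∀ᶠ t in 𝓝[>] (0 : ℝ), t • z ∈ resid zs (f (x₀ + t • x)) (f x₀)) :
    z ∈ dirDer zs f x₀ x := by
  refine mem_iInter₂.2 fun s hs => subset_closure ?_
  obtain ⟨t, htz, ht⟩ := (hz.and (Ioo_mem_nhdsGT hs)).exists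
  refine mem_iUnion₂.2 ⟨t, ht, t • z, htz, ?_⟩
  simp [smul_smul, ht.1.ne']

theorem exists_nonempty_of_dirDer_nonempty (hx₀ : (f x₀).Nonempty)
    (h : (dirDer zs f x₀ x).Nonempty) : ∃ t > (0 : ℝ), (f (x₀ + t • x)).Nonempty := by
  obtain ⟨z, hz⟩ := h
  obtain ⟨q, hq⟩ := closure_nonempty_iff.1 ⟨z, mem_iInter₂.1 hz 1 (mem_Ioi.2 one_pos)⟩
  obtain ⟨t, ht, hqt⟩ := mem_iUnion₂.1 hq
  exact ⟨t, ht.1, nonempty_of_resid_nonempty hx₀ (smul_set_nonempty.1 ⟨q, hqt⟩)⟩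

theorem dirDer_zero_eq_of_resid_eq {K : Set Z} (hres : resid zs (f x₀) (f x₀) = K)
    (hclosed : IsClosed K) (hcone : ∀ t : ℝ, 0 < t → t • K = K) :
    dirDer zs f x₀ 0 = K := by
  have hquot (s : ℝ) (hs : 0 < s) : ⋃ t ∈ Ioo (0 : ℝ) s, (1 / t) • K = K := by
    rw [iUnion₂_congr fun t ht => hcone (1 / t) (one_div_pos.2 ht.1)]
    exact biUnion_const (nonempty_Ioo.2 hs) K
  simp only [dirDer, smul_zero, add_zero, hres]
  rw [iInter₂_congr fun s hs => by rw [hquot s hs, hclosed.closure_eq]]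
  exact biInter_const nonempty_Ioi K

theorem ConvexSV.smul_add_smul_mem (hf : ConvexSV f) {v : X} {p b : Z}
    (hp : p ∈ f (x₀ + v)) (hb : b ∈ f x₀) {t : ℝ} (ht : t ∈ Ioo (0 : ℝ) 1) :
    t • p + (1 - t) • b ∈ f (x₀ + t • v) := by
  have hpoint : t • (x₀ + v) + (1 - t) • x₀ = x₀ + t • v := by module
  rw [← hpoint]
  exact hf _ _ t ht.1 ht.2
    (subset_closure (add_mem_add (smul_mem_smul_set hp) (smul_mem_smul_set hb)))

theorem ConvexSV.exists_forall_smul_mem_resid (hf : ConvexSV f) {v : X}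
    (hv : (f (x₀ + v)).Nonempty) :
    ∃ z, ∀ t ∈ Ioo (0 : ℝ) 1, t • z ∈ resid zs (f (x₀ + t • v)) (f x₀) := by
  obtain ⟨p, hp⟩ := hv
  by_cases hdom : ∃ w, ∀ b ∈ f x₀, zs b ≤ zs w
  · obtain ⟨w, hw⟩ := hdom
    refine ⟨p - w, fun t ht b hb =>
      mem_oplus_Hset_of_apply_le (hf.smul_add_smul_mem hp hb ht) ?_⟩
    have hbw : t * zs b ≤ t * zs w := mul_le_mul_of_nonneg_left (hw b hb) ht.1.le
    simp only [map_add, map_sub, map_smul, smul_eq_mul]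
    linarith
  · push Not at hdom
    refine ⟨0, fun t ht b _ => ?_⟩
    have ht' : 0 < 1 - t := sub_pos.2 ht.2
    -- The point supplied is the solution `c` of `t p + (1 - t) c = b`.
    obtain ⟨a, ha, hca⟩ := hdom ((1 - t)⁻¹ • (b - t • p))
    refine mem_oplus_Hset_of_apply_le (hf.smul_add_smul_mem hp ha ht) ?_
    rw [map_smul, smul_eq_mul, inv_mul_lt_iff₀ ht'] at hca
    simp only [map_add, map_sub, map_smul, smul_eq_mul, smul_zero, add_zero] at hca ⊢
    linarith

theorem ConvexSV.dirDer_nonempty (hf : ConvexSV f) {r : ℝ} (hr : 0 < r)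
    (hx : (f (x₀ + r • x)).Nonempty) : (dirDer zs f x₀ x).Nonempty := by
  obtain ⟨z, hz⟩ := hf.exists_forall_smul_mem_resid (zs := zs) hx
  refine ⟨r⁻¹ • z, mem_dirDer_of_eventually_smul_mem_resid ?_⟩
  filter_upwards [Ioo_mem_nhdsGT hr] with t ht
  have hmem := hz (t / r) ⟨div_pos ht.1 hr, (div_lt_one hr).2 ht.2⟩
  rwa [smul_smul, div_mul_cancel₀ t hr.ne', div_eq_mul_inv, mul_smul] at hmem

theorem ConvexSV.dirDer_nonempty_iff (hf : ConvexSV f) (hx₀ : (f x₀).Nonempty) :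
    (dirDer zs f x₀ x).Nonempty ↔ ∃ t > (0 : ℝ), (f (x₀ + t • x)).Nonempty :=
  ⟨exists_nonempty_of_dirDer_nonempty hx₀, fun ⟨_, ht, hx⟩ => hf.dirDer_nonempty ht hx⟩

theorem dirDer_zero_eq_Hset (hne : (f x₀).Nonempty) (h : oplus (f x₀) (Hset zs) ≠ univ) :
    dirDer zs f x₀ 0 = Hset zs :=
  dirDer_zero_eq_of_resid_eq (resid_self_eq_Hset hne h) isClosed_Hset fun _ => smul_Hset

theorem dirDer_zero_eq_univ
    (h : oplus (f x₀) (Hset zs) = univ ∨ oplus (f x₀) (Hset zs) = ∅) :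
    dirDer zs f x₀ 0 = univ :=
  dirDer_zero_eq_of_resid_eq (resid_self_eq_univ h) isClosed_univ
    fun _ ht => smul_set_univ₀ ht.ne'

end DirectionalDerivative

theorem stmt10_general {Z : Type*} [AddCommGroup Z] [Module ℝ Z] [TopologicalSpace Z]
    {X : Type*} [AddCommGroup X] [Module ℝ X]
    (zs : Z →L[ℝ] ℝ) (f : X → Set Z) (hf : ConvexSV f) (x₀ : X) (hx₀ : f x₀ ≠ ∅) :
    ({x : X | dirDer zs f x₀ x ≠ ∅} =
      ⋃ t ∈ Set.Ioi (0:ℝ), t • ({x : X | f x ≠ ∅} - {x₀})) ∧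
    ((oplus (f x₀) (Hset zs) ≠ Set.univ ∧ oplus (f x₀) (Hset zs) ≠ ∅) →
      dirDer zs f x₀ 0 = Hset zs) ∧
    ((oplus (f x₀) (Hset zs) = Set.univ ∨ oplus (f x₀) (Hset zs) = ∅) →
      dirDer zs f x₀ 0 = Set.univ) := by
  have hne : (f x₀).Nonempty := nonempty_iff_ne_empty.2 hx₀
  refine ⟨?_, fun h => dirDer_zero_eq_Hset hne h.1, dirDer_zero_eq_univ⟩
  ext x
  simp only [← nonempty_iff_ne_empty, mem_iUnion_Ioi_smul_sub_singleton]
  exact hf.dirDer_nonempty_iff hne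

theorem stmt10 {Z : Type*} [AddCommGroup Z] [Module ℝ Z] [TopologicalSpace Z]
    [IsTopologicalAddGroup Z] [ContinuousSMul ℝ Z] [LocallyConvexSpace ℝ Z]
    {X : Type*} [AddCommGroup X] [Module ℝ X] [TopologicalSpace X]
    [IsTopologicalAddGroup X] [ContinuousSMul ℝ X] [LocallyConvexSpace ℝ X]
    (C : Set Z) (hCconv : Convex ℝ C) (hC0 : (0:Z) ∈ C)
    (hCcone : ∀ t : ℝ, 0 < t → t • C ⊆ C) (hclC : closure C ≠ Set.univ)
    (zs : Z →L[ℝ] ℝ) (hzs : ∀ z ∈ C, zs z ≤ 0) (hzs0 : zs ≠ 0)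
    (f : X → Set Z) (hf : ConvexSV f) (hfG : ∀ x : X, f x ∈ Gset C)
    (x₀ : X) (hx₀ : f x₀ ≠ ∅) :
    ({x : X | dirDer zs f x₀ x ≠ ∅} =
      ⋃ t ∈ Set.Ioi (0:ℝ), t • ({x : X | f x ≠ ∅} - {x₀})) ∧
    ((oplus (f x₀) (Hset zs) ≠ Set.univ ∧ oplus (f x₀) (Hset zs) ≠ ∅) →
      dirDer zs f x₀ 0 = Hset zs) ∧
    ((oplus (f x₀) (Hset zs) = Set.univ ∨ oplus (f x₀) (Hset zs) = ∅) →
      dirDer zs f x₀ 0 = Set.univ) :=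
  stmt10_general zs f hf x₀ hx₀
end

section
/- Let f : X → G(Z,C) be convex, x₀ ∈ X, x* ∈ X* and z* ∈ C⁻ \ {0}. Then the following are equivalent: (a) S_{(x*,z*)}(x) ⊇ f'_{z*}(x₀, x) for all x ∈ X; (b) S_{(x*,z*)}(x − x₀) ⊇ f(x) −_{z*} f(x₀) for all x ∈ X. -/
open Set Topology Pointwise

/-!
Convexity makes the residuated difference quotient `(1 / t) • (f (x₀ + t • x) −_{z*} f x₀)` grow as
`t` decreases to `0`, so the quotient at `t = 1` lies in every set of the intersection defining the
directional derivative; hence (a) implies (b). Conversely, since `S_{(x*,z*)}` is positively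
homogeneous, (b) puts every difference quotient into the closed set `S_{(x*,z*)}(x)`.
-/

section Residuation

variable {Z : Type*} [AddCommGroup Z] [Module ℝ Z] [TopologicalSpace Z]
  {zs : Z →L[ℝ] ℝ} {A A' B : Set Z} {t : ℝ}

theorem smul_mem_Hset {z : Z} (ht : 0 ≤ t) (hz : z ∈ Hset zs) : t • z ∈ Hset zs := by
  change zs (t • z) ≤ 0
  rw [map_smul]
  exact smul_nonpos_of_nonneg_of_nonpos ht hz

variable [ContinuousAdd Z] [ContinuousConstSMul ℝ Z]

theorem smul_add_mem_oplus_Hset {y b : Z} (ht : 0 ≤ t) (hA : ∀ a ∈ A, t • a + b ∈ A')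
    (hy : y ∈ oplus A (Hset zs)) : t • y + b ∈ oplus A' (Hset zs) := by
  refine map_mem_closure (f := fun y : Z => t • y + b) (by fun_prop) hy ?_
  rintro _ ⟨a, ha, h, hh, rfl⟩
  exact ⟨t • a + b, hA a ha, t • h, smul_mem_Hset ht hh, by module⟩

theorem smul_resid_subset_resid (ht : 0 ≤ t) (hA' : t • A + (1 - t) • B ⊆ A') :
    t • resid zs A B ⊆ resid zs A' B := by
  rintro _ ⟨z, hz, rfl⟩ b hb
  have hcombo : b + t • z = t • (b + z) + (1 - t) • b := by module
  rw [hcombo]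
  exact smul_add_mem_oplus_Hset ht
    (fun a ha => hA' (add_mem_add (smul_mem_smul_set ha) (smul_mem_smul_set hb))) (hz b hb)

end Residuation

section DirectionalDerivative

variable {X Z : Type*} [AddCommGroup X] [Module ℝ X]
  [AddCommGroup Z] [Module ℝ Z] [TopologicalSpace Z] {f : X → Set Z}

theorem dirDer_subset_of_isClosed {zs : Z →L[ℝ] ℝ} {x₀ x : X} {S : Set Z} (hS : IsClosed S)
    (h : ∀ t : ℝ, 0 < t → resid zs (f (x₀ + t • x)) (f x₀) ⊆ t • S) :
    dirDer zs f x₀ x ⊆ S := by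
  refine (biInter_subset_of_mem (mem_Ioi.2 one_pos)).trans (closure_minimal ?_ hS)
  refine iUnion₂_subset fun t ht => ?_
  rw [one_div, ← subset_smul_set_iff₀ ht.1.ne']
  exact h t ht.1

variable [ContinuousAdd Z] [ContinuousConstSMul ℝ Z] (zs : Z →L[ℝ] ℝ)

theorem ConvexSV.smul_resid_subset (hf : ConvexSV f) (x₀ x : X) {t : ℝ}
    (ht₀ : 0 < t) (ht₁ : t < 1) :
    t • resid zs (f (x₀ + x)) (f x₀) ⊆ resid zs (f (x₀ + t • x)) (f x₀) := by
  have hpoint : x₀ + t • x = t • (x₀ + x) + (1 - t) • x₀ := by module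
  rw [hpoint]
  exact smul_resid_subset_resid ht₀.le (subset_closure.trans (hf (x₀ + x) x₀ t ht₀ ht₁))

theorem ConvexSV.resid_subset_dirDer (hf : ConvexSV f) (x₀ x : X) :
    resid zs (f (x₀ + x)) (f x₀) ⊆ dirDer zs f x₀ x := by
  refine subset_iInter₂ fun s hs => ?_
  obtain ⟨t, ht₀, ht⟩ := exists_between (lt_min (mem_Ioi.1 hs) one_pos)
  obtain ⟨hts, ht₁⟩ := lt_min_iff.1 ht
  have hquotient : resid zs (f (x₀ + x)) (f x₀) ⊆
      (1 / t) • resid zs (f (x₀ + t • x)) (f x₀) := by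
    rw [one_div, subset_smul_set_iff₀ (inv_ne_zero ht₀.ne'), inv_inv]
    exact hf.smul_resid_subset zs x₀ x ht₀ ht₁
  exact fun z hz => subset_closure (mem_biUnion (mem_Ioo.2 ⟨ht₀, hts⟩) (hquotient hz))

end DirectionalDerivative

section Sfun

variable {X Z : Type*} [AddCommGroup X] [Module ℝ X] [TopologicalSpace X]
  [AddCommGroup Z] [Module ℝ Z] [TopologicalSpace Z] (xs : X →L[ℝ] ℝ) (zs : Z →L[ℝ] ℝ)

theorem isClosed_Sfun (x : X) : IsClosed (Sfun xs zs x) :=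
  isClosed_le (by fun_prop) continuous_const

theorem Sfun_smul {t : ℝ} (ht : 0 < t) (x : X) : Sfun xs zs (t • x) = t • Sfun xs zs x := by
  ext z
  rw [mem_smul_set_iff_inv_smul_mem₀ ht.ne']
  change xs (t • x) + zs z ≤ 0 ↔ xs x + zs (t⁻¹ • z) ≤ 0
  have hscale : xs (t • x) + zs z = t • (xs x + zs (t⁻¹ • z)) := by
    simp only [map_smul, smul_eq_mul]
    field_simp
  rw [hscale, smul_nonpos_iff_nonpos_of_pos_left ht]

end Sfun

theorem stmt12_general {X Z : Type*} [AddCommGroup X] [Module ℝ X] [TopologicalSpace X]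
    [AddCommGroup Z] [Module ℝ Z] [TopologicalSpace Z] [ContinuousAdd Z] [ContinuousConstSMul ℝ Z]
    (zs : Z →L[ℝ] ℝ) {f : X → Set Z} (hf : ConvexSV f) (x₀ : X) (xs : X →L[ℝ] ℝ) :
    (∀ x : X, dirDer zs f x₀ x ⊆ Sfun xs zs x) ↔
      (∀ x : X, resid zs (f x) (f x₀) ⊆ Sfun xs zs (x - x₀)) := by
  constructor
  · intro hder x
    have hresid := hf.resid_subset_dirDer zs x₀ (x - x₀)
    rw [add_sub_cancel] at hresid
    exact hresid.trans (hder (x - x₀))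
  · intro hresid x
    refine dirDer_subset_of_isClosed (isClosed_Sfun xs zs x) fun t ht => ?_
    have hstep := hresid (x₀ + t • x)
    rwa [add_sub_cancel_left, Sfun_smul xs zs ht] at hstep

theorem stmt12 {Z : Type*} [AddCommGroup Z] [Module ℝ Z] [TopologicalSpace Z]
    [IsTopologicalAddGroup Z] [ContinuousSMul ℝ Z] [LocallyConvexSpace ℝ Z]
    {X : Type*} [AddCommGroup X] [Module ℝ X] [TopologicalSpace X]
    [IsTopologicalAddGroup X] [ContinuousSMul ℝ X] [LocallyConvexSpace ℝ X]
    (C : Set Z) (hCconv : Convex ℝ C) (hC0 : (0:Z) ∈ C)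
    (hCcone : ∀ t : ℝ, 0 < t → t • C ⊆ C) (hclC : closure C ≠ Set.univ)
    (zs : Z →L[ℝ] ℝ) (hzs : ∀ z ∈ C, zs z ≤ 0) (hzs0 : zs ≠ 0)
    (f : X → Set Z) (hf : ConvexSV f) (hfG : ∀ x : X, f x ∈ Gset C)
    (x₀ : X) (xs : X →L[ℝ] ℝ) :
    (∀ x : X, dirDer zs f x₀ x ⊆ Sfun xs zs x) ↔
      (∀ x : X, resid zs (f x) (f x₀) ⊆ Sfun xs zs (x - x₀)) :=
  stmt12_general zs hf x₀ xs
end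

section
/- Let f : X → G(Z,C) be convex, x₀ ∈ X, x* ∈ X* and z* ∈ C⁻ \ {0}, and assume additionally that dom f ≠ ∅ and f(x₀) ⊕ H(z*) ≠ Z. Then the following are equivalent: (b) S_{(x*,z*)}(x − x₀) ⊇ f(x) −_{z*} f(x₀) for all x ∈ X; (c) f(x₀) ⊕ S_{(x*,z*)}(−x₀) ⊇ f(x) ⊕ S_{(x*,z*)}(−x) for all x ∈ X; (d) S_{(x*,z*)}(x) −_{z*} f(x) ⊇ S_{(x*,z*)}(x₀) −_{z*} f(x₀) for all x ∈ X. -/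
open Set Topology Pointwise

/-!
A half-space `{z | z* z ≤ c}` only sees the supremum of `z*` over the set it is added to, so every
inclusion in the theorem is an inequality between values of the scalarization
`φ x = inf {-z* z | z ∈ f x}`. Conditions (c) and (d) both say that `x₀` minimizes `φ - x*`, because
an extended real is determined by the reals above it, or by those below it. Condition (b) says that
`φ x ≤ φ x₀ + r` implies `x* (x - x₀) ≤ r` for all real `r`, which is the same thing when `φ x₀` is
finite. The case `φ x₀ = ⊥` is excluded by `f x₀ ⊕ H(z*) ≠ Z`; if `φ x₀ = ⊤`, that is `f x₀ = ∅`,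
then (b) fails at `x = x₀`, and (c) and (d) fail at any `x` in the domain of `f`.
-/

theorem forall_le_coe_imp_iff {a b : EReal} : (∀ r : ℝ, a ≤ r → b ≤ r) ↔ b ≤ a :=
  ⟨fun h => EReal.le_of_forall_lt_iff_le.1 fun r hr => h r hr.le, fun h _ hr => h.trans hr⟩

theorem forall_coe_le_imp_iff {a b : EReal} : (∀ r : ℝ, r ≤ a → r ≤ b) ↔ a ≤ b :=
  ⟨fun h => EReal.ge_of_forall_gt_iff_ge.1 fun r hr => h r hr.le, fun h _ hr => hr.trans h⟩

theorem sub_coe_le_coe_iff {a : EReal} {r s : ℝ} : a - r ≤ s ↔ a ≤ ((s + r : ℝ) : EReal) := by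
  rw [EReal.sub_le_iff_le_add (.inl (EReal.coe_ne_bot r)) (.inl (EReal.coe_ne_top r)),
    EReal.coe_add]

theorem coe_le_sub_coe_iff {a : EReal} {r s : ℝ} : s ≤ a - r ↔ ((s + r : ℝ) : EReal) ≤ a := by
  rw [EReal.le_sub_iff_add_le (.inl (EReal.coe_ne_bot r)) (.inl (EReal.coe_ne_top r)),
    EReal.coe_add]

section Scalarization

variable {X Z : Type*} [AddCommGroup Z] [Module ℝ Z] [TopologicalSpace Z]
  {zs : Z →L[ℝ] ℝ} {f : X → Set Z} {x y : X} {z : Z}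

theorem scalFn_le_of_mem (hz : z ∈ f x) : scalFn zs f x ≤ ((-zs z : ℝ) : EReal) :=
  iInf₂_le z hz

theorem coe_le_scalFn_iff {r : ℝ} : r ≤ scalFn zs f x ↔ ∀ b ∈ f x, r ≤ -zs b := by
  simp only [scalFn, le_iInf_iff, EReal.coe_le_coe_iff]

theorem scalFn_eq_top_iff : scalFn zs f x = ⊤ ↔ f x = ∅ := by
  simp only [scalFn, iInf_eq_top, EReal.coe_ne_top, imp_false, eq_empty_iff_forall_notMem]

theorem scalFn_le_of_mem_oplus_sublevel {c : ℝ} (hz : z ∈ oplus (f x) {w | zs w ≤ c}) :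
    scalFn zs f x ≤ ((c - zs z : ℝ) : EReal) := by
  have isClosed_bound : IsClosed {w | scalFn zs f x ≤ ((c - zs w : ℝ) : EReal)} :=
    isClosed_le continuous_const (continuous_coe_real_ereal.comp (by fun_prop))
  refine closure_minimal ?_ isClosed_bound hz
  rintro _ ⟨a, ha, w, hw : zs w ≤ c, rfl⟩
  refine (scalFn_le_of_mem ha).trans (EReal.coe_le_coe_iff.2 ?_)
  rw [map_add]
  linarith

theorem resid_empty (A : Set Z) : resid zs A ∅ = univ :=
  eq_univ_of_forall fun _ _ hb => (notMem_empty _ hb).elim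

variable [ContinuousAdd Z] [ContinuousSMul ℝ Z]

/-- Moving `z` slightly in a direction in which `zs` decreases puts it into the sum itself, since
the infimum `scalFn zs f x` is approximated by points of `f x`. -/
theorem mem_oplus_sublevel_of_scalFn_le (hzs : Function.Surjective zs) {c : ℝ}
    (hz : scalFn zs f x ≤ ((c - zs z : ℝ) : EReal)) : z ∈ oplus (f x) {w | zs w ≤ c} := by
  obtain ⟨e, he⟩ := hzs (-1)
  have tendsto_z : Filter.Tendsto (fun ε : ℝ => z + ε • e) (𝓝[>] 0) (𝓝 z) := by
    have continuous_path : Continuous fun ε : ℝ => z + ε • e := by fun_prop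
    simpa using (continuous_path.tendsto 0).mono_left nhdsWithin_le_nhds
  refine mem_closure_of_tendsto tendsto_z ?_
  filter_upwards [self_mem_nhdsWithin] with ε (hε : 0 < ε)
  have scalFn_lt : scalFn zs f x < ((c - zs z + ε : ℝ) : EReal) :=
    hz.trans_lt (EReal.coe_lt_coe_iff.2 (lt_add_of_pos_right _ hε))
  obtain ⟨a, ha, hlt⟩ : ∃ a ∈ f x, -zs a < c - zs z + ε := by
    simpa only [scalFn, iInf_lt_iff, EReal.coe_lt_coe_iff, exists_prop] using scalFn_lt
  refine ⟨a, ha, z + ε • e - a, ?_, add_sub_cancel _ _⟩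
  simp only [mem_ofPred_eq, map_sub, map_add, map_smul, he, smul_eq_mul]
  linarith

theorem mem_oplus_sublevel_iff (hzs : Function.Surjective zs) {c : ℝ} :
    z ∈ oplus (f x) {w | zs w ≤ c} ↔ scalFn zs f x ≤ ((c - zs z : ℝ) : EReal) :=
  ⟨scalFn_le_of_mem_oplus_sublevel, mem_oplus_sublevel_of_scalFn_le hzs⟩

theorem mem_oplus_Hset_iff (hzs : Function.Surjective zs) :
    z ∈ oplus (f x) (Hset zs) ↔ scalFn zs f x ≤ ((-zs z : ℝ) : EReal) := by
  rw [Hset, mem_oplus_sublevel_iff hzs, zero_sub]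

theorem scalFn_ne_bot_of_oplus_Hset_ne_univ (hzs : Function.Surjective zs)
    (hH : oplus (f x) (Hset zs) ≠ univ) : scalFn zs f x ≠ ⊥ := fun hbot =>
  hH (eq_univ_of_forall fun _ => (mem_oplus_Hset_iff hzs).2 (hbot ▸ bot_le))

theorem mem_resid_iff (hzs : Function.Surjective zs) :
    z ∈ resid zs (f x) (f y) ↔ scalFn zs f x + zs z ≤ scalFn zs f y := by
  have add_le_iff (b : Z) : scalFn zs f x + zs z ≤ ((-zs b : ℝ) : EReal) ↔
      scalFn zs f x ≤ ((-zs (b + z) : ℝ) : EReal) := by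
    rw [← EReal.le_sub_iff_add_le (.inl (EReal.coe_ne_bot _)) (.inl (EReal.coe_ne_top _)),
      ← EReal.coe_sub, map_add, neg_add']
  rw [scalFn.eq_def zs f y, le_iInf₂_iff]
  simp only [resid, mem_ofPred_eq, mem_oplus_Hset_iff hzs, add_le_iff]

end Scalarization

section Subgradient

variable {X Z : Type*} [AddCommGroup X] [Module ℝ X] [TopologicalSpace X]
  [AddCommGroup Z] [Module ℝ Z] [TopologicalSpace Z]
  {zs : Z →L[ℝ] ℝ} {f : X → Set Z} {xs : X →L[ℝ] ℝ} {x y x₀ : X} {z : Z}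

theorem oplus_Sfun_Hset : oplus (Sfun xs zs x) (Hset zs) = Sfun xs zs x := by
  apply Subset.antisymm
  · have isClosed_Sfun : IsClosed (Sfun xs zs x) := isClosed_le (by fun_prop) continuous_const
    refine closure_minimal ?_ isClosed_Sfun
    rintro _ ⟨a, ha : xs x + zs a ≤ 0, w, hw : zs w ≤ 0, rfl⟩
    simp only [Sfun, mem_ofPred_eq, map_add]
    linarith
  · have zero_mem_Hset : (0 : Z) ∈ Hset zs := (map_zero zs).le
    exact (subset_add_left _ zero_mem_Hset).trans subset_closure

theorem mem_resid_Sfun_iff :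
    z ∈ resid zs (Sfun xs zs x) (f y) ↔ zs z ≤ scalFn zs f y - xs x := by
  rw [coe_le_sub_coe_iff, coe_le_scalFn_iff, resid, oplus_Sfun_Hset]
  simp only [Sfun, mem_ofPred_eq, map_add]
  refine forall₂_congr fun b _ => ?_
  constructor <;> intro h <;> linarith

theorem resid_Sfun_subset_iff (hzs : Function.Surjective zs) :
    resid zs (Sfun xs zs x₀) (f x₀) ⊆ resid zs (Sfun xs zs x) (f x) ↔
      scalFn zs f x₀ - xs x₀ ≤ scalFn zs f x - xs x := by
  simp only [subset_def, mem_resid_Sfun_iff]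
  rw [← forall_coe_le_imp_iff, hzs.forall]

theorem Sfun_ne_univ (hzs : Function.Surjective zs) : Sfun xs zs x ≠ univ := by
  obtain ⟨w, hw⟩ := hzs (1 - xs x)
  refine (ne_univ_iff_exists_notMem _).2 ⟨w, ?_⟩
  simp only [Sfun, mem_ofPred_eq, hw, add_sub_cancel, not_le, one_pos]

theorem ne_empty_of_scalFn_sub_le (hx : f x ≠ ∅)
    (h : scalFn zs f x₀ - xs x₀ ≤ scalFn zs f x - xs x) : f x₀ ≠ ∅ := by
  rw [Ne, ← scalFn_eq_top_iff (zs := zs)] at hx ⊢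
  intro h₀
  rw [h₀, EReal.top_sub_coe, EReal.le_sub_iff_add_le (.inl (EReal.coe_ne_bot _))
    (.inl (EReal.coe_ne_top _)), EReal.top_add_coe, top_le_iff] at h
  exact hx h

variable [ContinuousAdd Z] [ContinuousSMul ℝ Z]

theorem mem_oplus_Sfun_neg_iff (hzs : Function.Surjective zs) :
    z ∈ oplus (f y) (Sfun xs zs (-x)) ↔ scalFn zs f y - xs x ≤ ((-zs z : ℝ) : EReal) := by
  have Sfun_neg_eq : Sfun xs zs (-x) = {w | zs w ≤ xs x} := by
    simp only [Sfun, map_neg, neg_add_nonpos_iff]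
  rw [Sfun_neg_eq, mem_oplus_sublevel_iff hzs, sub_coe_le_coe_iff, neg_add_eq_sub]

theorem oplus_Sfun_neg_subset_iff (hzs : Function.Surjective zs) :
    oplus (f x) (Sfun xs zs (-x)) ⊆ oplus (f x₀) (Sfun xs zs (-x₀)) ↔
      scalFn zs f x₀ - xs x₀ ≤ scalFn zs f x - xs x := by
  simp only [subset_def, mem_oplus_Sfun_neg_iff hzs]
  rw [← forall_le_coe_imp_iff, (neg_surjective.comp hzs).forall]
  rfl

theorem resid_subset_Sfun_sub_iff (hzs : Function.Surjective zs)
    (hbot : scalFn zs f x₀ ≠ ⊥) (htop : scalFn zs f x₀ ≠ ⊤) :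
    resid zs (f x) (f x₀) ⊆ Sfun xs zs (x - x₀) ↔
      scalFn zs f x₀ - xs x₀ ≤ scalFn zs f x - xs x := by
  simp only [subset_def, mem_resid_iff hzs]
  lift scalFn zs f x₀ to ℝ using ⟨htop, hbot⟩ with m
  have add_le_iff (r : ℝ) : scalFn zs f x + r ≤ m ↔
      scalFn zs f x - xs x ≤ ((m - r - xs x : ℝ) : EReal) := by
    rw [← EReal.le_sub_iff_add_le (.inl (EReal.coe_ne_bot r)) (.inl (EReal.coe_ne_top r)),
      ← EReal.coe_sub, sub_coe_le_coe_iff, sub_add_cancel]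
  have mem_Sfun_iff (w : Z) : w ∈ Sfun xs zs (x - x₀) ↔
      (m : EReal) - xs x₀ ≤ ((m - zs w - xs x : ℝ) : EReal) := by
    rw [← EReal.coe_sub, EReal.coe_le_coe_iff, Sfun, mem_ofPred_eq, map_sub]
    constructor <;> intro h <;> linarith
  have surjective_bound : Function.Surjective fun w => m - zs w - xs x := fun s => by
    obtain ⟨w, hw⟩ := hzs (m - s - xs x)
    exact ⟨w, by simp only [hw]; ring⟩
  simp only [add_le_iff, mem_Sfun_iff]
  rw [← forall_le_coe_imp_iff, surjective_bound.forall]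

theorem forall_resid_subset_Sfun_sub_iff (hzs : Function.Surjective zs) (hdom : ∃ x, f x ≠ ∅)
    (hbot : scalFn zs f x₀ ≠ ⊥) :
    (∀ x, resid zs (f x) (f x₀) ⊆ Sfun xs zs (x - x₀)) ↔
      ∀ x, scalFn zs f x₀ - xs x₀ ≤ scalFn zs f x - xs x := by
  rcases eq_or_ne (f x₀) ∅ with h₀ | h₀
  · obtain ⟨x, hx⟩ := hdom
    refine iff_of_false (fun h => ?_) fun h => ne_empty_of_scalFn_sub_le hx (h x) h₀
    have univ_subset_Sfun := h x₀
    rw [h₀, resid_empty] at univ_subset_Sfun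
    exact Sfun_ne_univ hzs (univ_subset_iff.1 univ_subset_Sfun)
  · exact forall_congr' fun x =>
      resid_subset_Sfun_sub_iff hzs hbot (scalFn_eq_top_iff.not.2 h₀)

end Subgradient

theorem stmt13_general {Z : Type*} [AddCommGroup Z] [Module ℝ Z] [TopologicalSpace Z]
    [ContinuousAdd Z] [ContinuousSMul ℝ Z]
    {X : Type*} [AddCommGroup X] [Module ℝ X] [TopologicalSpace X]
    (zs : Z →L[ℝ] ℝ) (hzs0 : zs ≠ 0) (f : X → Set Z) (x₀ : X) (xs : X →L[ℝ] ℝ)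
    (hdom : ∃ x : X, f x ≠ ∅) (hx₀H : oplus (f x₀) (Hset zs) ≠ Set.univ) :
    ((∀ x : X, resid zs (f x) (f x₀) ⊆ Sfun xs zs (x - x₀)) ↔
      (∀ x : X, oplus (f x) (Sfun xs zs (-x)) ⊆ oplus (f x₀) (Sfun xs zs (-x₀)))) ∧
    ((∀ x : X, resid zs (f x) (f x₀) ⊆ Sfun xs zs (x - x₀)) ↔
      (∀ x : X, resid zs (Sfun xs zs x₀) (f x₀) ⊆ resid zs (Sfun xs zs x) (f x))) := by
  have hzs : Function.Surjective zs :=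
    LinearMap.surjective (f := zs.toLinearMap) (mod_cast hzs0)
  have hbot : scalFn zs f x₀ ≠ ⊥ := scalFn_ne_bot_of_oplus_Hset_ne_univ hzs hx₀H
  simp only [forall_resid_subset_Sfun_sub_iff hzs hdom hbot, oplus_Sfun_neg_subset_iff hzs,
    resid_Sfun_subset_iff hzs, and_self]

theorem stmt13 {Z : Type*} [AddCommGroup Z] [Module ℝ Z] [TopologicalSpace Z]
    [IsTopologicalAddGroup Z] [ContinuousSMul ℝ Z] [LocallyConvexSpace ℝ Z]
    {X : Type*} [AddCommGroup X] [Module ℝ X] [TopologicalSpace X]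
    [IsTopologicalAddGroup X] [ContinuousSMul ℝ X] [LocallyConvexSpace ℝ X]
    (C : Set Z) (hCconv : Convex ℝ C) (hC0 : (0:Z) ∈ C)
    (hCcone : ∀ t : ℝ, 0 < t → t • C ⊆ C) (hclC : closure C ≠ Set.univ)
    (zs : Z →L[ℝ] ℝ) (hzs : ∀ z ∈ C, zs z ≤ 0) (hzs0 : zs ≠ 0)
    (f : X → Set Z) (hf : ConvexSV f) (hfG : ∀ x : X, f x ∈ Gset C)
    (x₀ : X) (xs : X →L[ℝ] ℝ)
    (hdom : ∃ x : X, f x ≠ ∅) (hx₀H : oplus (f x₀) (Hset zs) ≠ Set.univ) :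
    ((∀ x : X, resid zs (f x) (f x₀) ⊆ Sfun xs zs (x - x₀)) ↔
      (∀ x : X, oplus (f x) (Sfun xs zs (-x)) ⊆ oplus (f x₀) (Sfun xs zs (-x₀)))) ∧
    ((∀ x : X, resid zs (f x) (f x₀) ⊆ Sfun xs zs (x - x₀)) ↔
      (∀ x : X, resid zs (Sfun xs zs x₀) (f x₀) ⊆ resid zs (Sfun xs zs x) (f x))) := by
  exact stmt13_general zs hzs0 f x₀ xs hdom hx₀H
end
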